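/- arXiv:1803.00109 — 5 statements merged into one kernel-verified Lean document; each statement's English description precedes it below -/
import Mathlib

section
/- Let {E_ℓ} be a Kraus family on the D×D complex matrices whose channel is faithful, and let J be a conserved quantity with phase λ, i.e., ∑_ℓ E_ℓ† J E_ℓ = e^{−iλ} J for some real λ. Then for every index ℓ one has J E_ℓ = e^{−iλ} E_ℓ J. -/
open Matrix ComplexOrder

/-- For a faithful Kraus channel, any conserved quantity `J` with phase `λ`
(i.e. `∑ ℓ, Eℓᴴ J Eℓ = e^{-iλ} J`) commutes with every Kraus operator up to the phase:
`J Eℓ = e^{-iλ} Eℓ J`. -/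
theorem conserved_quantity_commutes_with_kraus
    {D : ℕ} {ι : Type*} [Fintype ι]
    (E : ι → Matrix (Fin D) (Fin D) ℂ)
    (hKraus : ∑ ℓ, (E ℓ)ᴴ * E ℓ = 1)
    (hFaithful : ∃ ρ : Matrix (Fin D) (Fin D) ℂ,
      ρ.PosDef ∧ ∑ ℓ, E ℓ * ρ * (E ℓ)ᴴ = ρ)
    (J : Matrix (Fin D) (Fin D) ℂ) (lam : ℝ)
    (hJ : ∑ ℓ, (E ℓ)ᴴ * J * E ℓ = Complex.exp (-(Complex.I * (lam : ℂ))) • J) :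
    ∀ ℓ, J * E ℓ = Complex.exp (-(Complex.I * (lam : ℂ))) • (E ℓ * J) := by
  obtain ⟨ρ, hρ, hfix⟩ := hFaithful
  generalize hc : Complex.exp (-(Complex.I * (lam : ℂ))) = c at hJ ⊢
  have hcc : star c * c = 1 := by
    rw [← hc, Complex.star_def, ← Complex.exp_conj, ← Complex.exp_add]
    simp
  have hJ' : ∑ ℓ, (E ℓ)ᴴ * Jᴴ * E ℓ = star c • Jᴴ := by
    have h := congrArg conjTranspose hJ
    simpa [conjTranspose_sum, Matrix.mul_assoc] using h
  have h1 : ∑ ℓ, trace (J * (E ℓ * ρ * (E ℓ)ᴴ) * Jᴴ) = trace (J * ρ * Jᴴ) := by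
    rw [← trace_sum, ← Finset.sum_mul, ← Finset.mul_sum, hfix]
  have h2 : ∑ ℓ, trace (((E ℓ)ᴴ * J * E ℓ) * (ρ * Jᴴ)) = c * trace (J * ρ * Jᴴ) := by
    rw [← trace_sum, ← Finset.sum_mul, hJ]
    simp [Matrix.mul_assoc]
  have h3 : ∑ ℓ, trace ((J * ρ) * ((E ℓ)ᴴ * Jᴴ * E ℓ)) = star c * trace (J * ρ * Jᴴ) := by
    rw [← trace_sum, ← Finset.mul_sum, hJ']
    simp [Matrix.mul_assoc]
  have h4 : ∑ ℓ, trace (((E ℓ)ᴴ * E ℓ) * (J * ρ * Jᴴ)) = trace (J * ρ * Jᴴ) := by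
    rw [← trace_sum, ← Finset.sum_mul, hKraus, Matrix.one_mul]
  have hsum : ∑ ℓ, trace ((J * E ℓ - c • (E ℓ * J)) * ρ * (J * E ℓ - c • (E ℓ * J))ᴴ) = 0 := by
    have hterm : ∀ ℓ, trace ((J * E ℓ - c • (E ℓ * J)) * ρ * (J * E ℓ - c • (E ℓ * J))ᴴ)
        = trace (J * (E ℓ * ρ * (E ℓ)ᴴ) * Jᴴ)
          - star c * trace (((E ℓ)ᴴ * J * E ℓ) * (ρ * Jᴴ))
          - c * trace ((J * ρ) * ((E ℓ)ᴴ * Jᴴ * E ℓ))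
          + (star c * c) * trace (((E ℓ)ᴴ * E ℓ) * (J * ρ * Jᴴ)) := by
      intro ℓ
      have e2 : trace (((E ℓ)ᴴ * J * E ℓ) * (ρ * Jᴴ)) = trace (J * E ℓ * ρ * (Jᴴ * (E ℓ)ᴴ)) := by
        rw [Matrix.mul_assoc, Matrix.mul_assoc, trace_mul_comm]
        simp only [Matrix.mul_assoc]
      have e3 : trace ((J * ρ) * ((E ℓ)ᴴ * Jᴴ * E ℓ)) = trace (E ℓ * J * ρ * ((E ℓ)ᴴ * Jᴴ)) := by
        rw [← Matrix.mul_assoc, trace_mul_comm]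
        simp only [Matrix.mul_assoc]
      have e4 : trace (((E ℓ)ᴴ * E ℓ) * (J * ρ * Jᴴ)) = trace (E ℓ * J * ρ * (Jᴴ * (E ℓ)ᴴ)) := by
        rw [Matrix.mul_assoc, trace_mul_comm]
        simp only [Matrix.mul_assoc]
      have e1 : trace (J * (E ℓ * ρ * (E ℓ)ᴴ) * Jᴴ) = trace (J * E ℓ * ρ * ((E ℓ)ᴴ * Jᴴ)) := by
        simp only [Matrix.mul_assoc]
      rw [e1, e2, e3, e4]
      simp only [conjTranspose_sub, conjTranspose_smul, conjTranspose_mul, Matrix.sub_mul,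
        Matrix.mul_sub, Matrix.smul_mul, Matrix.mul_smul, trace_sub, trace_smul, smul_eq_mul]
      ring
    simp only [hterm, Finset.sum_add_distrib, Finset.sum_sub_distrib, ← Finset.mul_sum]
    rw [h1, h2, h3, h4]
    linear_combination (-trace (J * ρ * Jᴴ)) * hcc
  have hpsd : ∀ ℓ, ((J * E ℓ - c • (E ℓ * J)) * ρ * (J * E ℓ - c • (E ℓ * J))ᴴ).PosSemidef :=
    fun ℓ => hρ.posSemidef.mul_mul_conjTranspose_same _
  intro ℓ
  have h0 := (Finset.sum_eq_zero_iff_of_nonneg (fun ℓ _ => (hpsd ℓ).trace_nonneg)).1 hsum ℓ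
    (Finset.mem_univ ℓ)
  rw [(hpsd ℓ).trace_eq_zero_iff] at h0
  rw [← sub_eq_zero]
  generalize J * E ℓ - c • (E ℓ * J) = X at h0
  rw [← conjTranspose_eq_zero]
  apply Matrix.ext_of_mulVec_single
  intro i
  rw [Matrix.zero_mulVec]
  by_contra hne
  have hpos := hρ.dotProduct_mulVec_pos hne
  have hz : star (Xᴴ *ᵥ Pi.single i 1) ⬝ᵥ ρ *ᵥ (Xᴴ *ᵥ Pi.single i 1) = 0 := by
    rw [star_mulVec, conjTranspose_conjTranspose, ← dotProduct_mulVec, mulVec_mulVec,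
      mulVec_mulVec, h0]
    simp
  exact hpos.ne' hz
end

section
/- Let {E_ℓ} be a Kraus family on the D×D complex matrices whose channel is faithful. If J₁ is a conserved quantity with phase λ₁ and J₂ is a conserved quantity with phase λ₂, then the product J₁J₂ satisfies ∑_ℓ E_ℓ† (J₁J₂) E_ℓ = e^{−i(λ₁+λ₂)} J₁J₂, i.e., J₁J₂ is a conserved quantity with phase λ₁ + λ₂. -/
open Matrix ComplexOrder

lemma aux_zero {D : ℕ} (ρ K : Matrix (Fin D) (Fin D) ℂ) (hρ : ρ.PosDef)
    (h : K * ρ * Kᴴ = 0) : K = 0 := by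
  rw [← conjTranspose_eq_zero]
  apply Matrix.ext_of_mulVec_single
  intro i
  rw [zero_mulVec]
  by_contra hx
  have := hρ.dotProduct_mulVec_pos hx
  rw [star_mulVec, conjTranspose_conjTranspose, ← dotProduct_mulVec, mulVec_mulVec, mulVec_mulVec,
    h] at this
  simp at this

lemma aux_comm {D : ℕ} {ι : Type*} [Fintype ι]
    (E : ι → Matrix (Fin D) (Fin D) ℂ)
    (hKraus : ∑ ℓ, (E ℓ)ᴴ * E ℓ = 1)
    (ρ : Matrix (Fin D) (Fin D) ℂ) (hρ : ρ.PosDef) (hE : ∑ ℓ, E ℓ * ρ * (E ℓ)ᴴ = ρ)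
    (J : Matrix (Fin D) (Fin D) ℂ) (c : ℂ) (hc : star c * c = 1)
    (hJ : ∑ ℓ, (E ℓ)ᴴ * J * E ℓ = c • J) (ℓ : ι) :
    J * E ℓ = c • (E ℓ * J) := by
  set K : ι → Matrix (Fin D) (Fin D) ℂ := fun ℓ => J * E ℓ - c • (E ℓ * J) with hK
  have hJ' : ∑ ℓ, (E ℓ)ᴴ * Jᴴ * E ℓ = star c • Jᴴ := by
    have := congrArg conjTranspose hJ
    simpa [conjTranspose_sum, Matrix.mul_assoc] using this
  have hc' : c * star c = 1 := by rw [mul_comm, hc]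
  have hsum : ∑ ℓ, (K ℓ)ᴴ * K ℓ = ∑ ℓ, (E ℓ)ᴴ * (Jᴴ * J) * E ℓ - Jᴴ * J := by
    have h1 : ∀ ℓ, (K ℓ)ᴴ * K ℓ = (E ℓ)ᴴ * (Jᴴ * J) * E ℓ - c • ((E ℓ)ᴴ * Jᴴ * E ℓ * J)
        - star c • (Jᴴ * ((E ℓ)ᴴ * J * E ℓ)) + (star c * c) • (Jᴴ * ((E ℓ)ᴴ * E ℓ) * J) := by
      intro ℓ
      simp only [hK, conjTranspose_sub, conjTranspose_mul, conjTranspose_smul, sub_mul, mul_sub,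
        Matrix.smul_mul, Matrix.mul_smul, Matrix.mul_assoc, smul_smul, mul_comm c]
      abel
    simp only [h1, Finset.sum_add_distrib, Finset.sum_sub_distrib, ← Finset.smul_sum,
      ← Finset.sum_mul, ← Finset.mul_sum, hJ, hJ', hKraus, hc, Matrix.smul_mul, Matrix.mul_smul,
      smul_smul, hc', one_smul, Matrix.mul_one]
    abel
  have htr : ∑ ℓ, (K ℓ * ρ * (K ℓ)ᴴ).trace = 0 := by
    have h2 : ∀ ℓ, (K ℓ * ρ * (K ℓ)ᴴ).trace = (((K ℓ)ᴴ * K ℓ) * ρ).trace := by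
      intro ℓ
      rw [Matrix.trace_mul_comm, Matrix.mul_assoc]
    have h3 : ∀ ℓ, ((E ℓ)ᴴ * (Jᴴ * J) * E ℓ * ρ).trace
        = ((Jᴴ * J) * (E ℓ * ρ * (E ℓ)ᴴ)).trace := by
      intro ℓ
      rw [Matrix.mul_assoc, Matrix.mul_assoc, Matrix.trace_mul_comm]
      simp only [Matrix.mul_assoc]
    simp only [h2]
    rw [← trace_sum, ← Finset.sum_mul, hsum, sub_mul, trace_sub, Finset.sum_mul, trace_sum]
    simp only [h3]
    rw [← trace_sum, ← Finset.mul_sum, hE, sub_self]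
  have hpsd : ∀ ℓ, (K ℓ * ρ * (K ℓ)ᴴ).PosSemidef := fun ℓ =>
    hρ.posSemidef.mul_mul_conjTranspose_same (K ℓ)
  have h0 := (Finset.sum_eq_zero_iff_of_nonneg (fun ℓ _ => (hpsd ℓ).trace_nonneg)).1 htr ℓ
    (Finset.mem_univ ℓ)
  exact sub_eq_zero.1 (aux_zero ρ (K ℓ) hρ ((hpsd ℓ).trace_eq_zero_iff.1 h0))

/-- For a faithful Kraus channel, the product of a conserved quantity with
phase `λ₁` and a conserved quantity with phase `λ₂` is a conserved quantity with
phase `λ₁ + λ₂`. -/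
theorem conserved_quantity_mul
    {D : ℕ} {ι : Type*} [Fintype ι]
    (E : ι → Matrix (Fin D) (Fin D) ℂ)
    (hKraus : ∑ ℓ, (E ℓ)ᴴ * E ℓ = 1)
    (hFaithful : ∃ ρ : Matrix (Fin D) (Fin D) ℂ,
      ρ.PosDef ∧ ∑ ℓ, E ℓ * ρ * (E ℓ)ᴴ = ρ)
    (J₁ J₂ : Matrix (Fin D) (Fin D) ℂ) (lam₁ lam₂ : ℝ)
    (hJ₁ : ∑ ℓ, (E ℓ)ᴴ * J₁ * E ℓ = Complex.exp (-(Complex.I * (lam₁ : ℂ))) • J₁)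
    (hJ₂ : ∑ ℓ, (E ℓ)ᴴ * J₂ * E ℓ = Complex.exp (-(Complex.I * (lam₂ : ℂ))) • J₂) :
    ∑ ℓ, (E ℓ)ᴴ * (J₁ * J₂) * E ℓ
      = Complex.exp (-(Complex.I * ((lam₁ : ℂ) + (lam₂ : ℂ)))) • (J₁ * J₂) := by
  obtain ⟨ρ, hρ, hE⟩ := hFaithful
  have hc : star (Complex.exp (-(Complex.I * (lam₂ : ℂ))))
      * Complex.exp (-(Complex.I * (lam₂ : ℂ))) = 1 := by
    rw [Complex.star_def, ← Complex.exp_conj, ← Complex.exp_add]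
    simp
  have hcomm := aux_comm E hKraus ρ hρ hE J₂ _ hc hJ₂
  have h1 : ∀ ℓ, (E ℓ)ᴴ * (J₁ * J₂) * E ℓ
      = Complex.exp (-(Complex.I * (lam₂ : ℂ))) • ((E ℓ)ᴴ * J₁ * E ℓ * J₂) := by
    intro ℓ
    rw [Matrix.mul_assoc, Matrix.mul_assoc J₁, hcomm]
    simp only [Matrix.mul_smul, Matrix.mul_assoc]
  simp only [h1]
  rw [← Finset.smul_sum, ← Finset.sum_mul, hJ₁, Matrix.smul_mul, smul_smul, ← Complex.exp_add]
  congr 2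
  ring
end

section
/- Let {E_ℓ} be a Kraus family on the D×D complex matrices whose channel is faithful, and let J be a nonzero diagonalizable D×D matrix that is a conserved quantity with phase λ, i.e., ∑_ℓ E_ℓ† J E_ℓ = e^{−iλ} J. Then there exist an integer n and a positive integer N with N ≤ D such that λ = 2πn/N; equivalently, e^{−iNλ} = 1 for some positive integer N ≤ D. -/
open Matrix ComplexOrder

lemma aux_commute
    {D : ℕ} {ι : Type*} [Fintype ι]
    (E : ι → Matrix (Fin D) (Fin D) ℂ)
    (hKraus : ∑ ℓ, (E ℓ)ᴴ * E ℓ = 1)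
    (ρ : Matrix (Fin D) (Fin D) ℂ) (hρ : ρ.PosDef) (hfix : ∑ ℓ, E ℓ * ρ * (E ℓ)ᴴ = ρ)
    (J : Matrix (Fin D) (Fin D) ℂ) (c : ℂ) (hc : star c * c = 1)
    (hJ : ∑ ℓ, (E ℓ)ᴴ * J * E ℓ = c • J) (l : ι) :
    J * E l = c • (E l * J) := by
  have hJ' : ∑ ℓ, (E ℓ)ᴴ * Jᴴ * E ℓ = star c • Jᴴ := by
    have := congrArg conjTranspose hJ
    simpa [conjTranspose_sum, conjTranspose_mul, Matrix.mul_assoc] using this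
  set M : ι → Matrix (Fin D) (Fin D) ℂ := fun l => J * E l - c • (E l * J) with hM
  have hexp : ∀ l, (M l)ᴴ * M l = (E l)ᴴ * (Jᴴ * J) * E l
      - c • (((E l)ᴴ * Jᴴ * E l) * J) - star c • (Jᴴ * ((E l)ᴴ * J * E l))
      + Jᴴ * ((E l)ᴴ * E l) * J := by
    intro l
    simp only [hM, conjTranspose_sub, conjTranspose_smul, conjTranspose_mul, Matrix.sub_mul,
      Matrix.mul_sub, Matrix.smul_mul, Matrix.mul_smul, smul_sub, smul_smul, hc, one_smul,
      mul_comm c (star c), Matrix.mul_assoc]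
    abel
  have hsum : ∑ l, (M l)ᴴ * M l = ∑ l, (E l)ᴴ * (Jᴴ * J) * E l - Jᴴ * J := by
    simp only [hexp, Finset.sum_add_distrib, Finset.sum_sub_distrib, ← Finset.smul_sum,
      ← Finset.sum_mul, ← Finset.mul_sum, hJ, hJ', hKraus]
    simp only [Matrix.smul_mul, Matrix.mul_smul, smul_smul, hc, mul_comm c (star c), one_smul,
      Matrix.mul_one]
    abel
  have htr : ∑ l, (M l * ρ * (M l)ᴴ).trace = 0 := by
    have h1 : ∀ l, (M l * ρ * (M l)ᴴ).trace = (ρ * ((M l)ᴴ * M l)).trace := by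
      intro l
      rw [Matrix.mul_assoc, Matrix.trace_mul_comm, Matrix.mul_assoc]
    have h2 : ∀ l, (ρ * ((E l)ᴴ * (Jᴴ * J) * E l)).trace
        = ((E l * ρ * (E l)ᴴ) * (Jᴴ * J)).trace := by
      intro l
      rw [← Matrix.mul_assoc, Matrix.trace_mul_comm]
      simp only [Matrix.mul_assoc]
    simp only [h1]
    rw [← Matrix.trace_sum, ← Finset.mul_sum, hsum, Matrix.mul_sub, Matrix.trace_sub,
      Finset.mul_sum, Matrix.trace_sum]
    simp only [h2]
    rw [← Matrix.trace_sum, ← Finset.sum_mul, hfix, sub_self]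
  have hps : ∀ l, (M l * ρ * (M l)ᴴ).PosSemidef := fun l =>
    hρ.posSemidef.mul_mul_conjTranspose_same (M l)
  have h0 := (Finset.sum_eq_zero_iff_of_nonneg (fun l _ => (hps l).trace_nonneg)).1 htr l
    (Finset.mem_univ l)
  have h3 : M l * ρ * (M l)ᴴ = 0 := (hps l).trace_eq_zero_iff.1 h0
  have h4 : (M l)ᴴ = 0 := by
    have key : ∀ x, (M l)ᴴ *ᵥ x = 0 := by
      intro x
      by_contra hx
      have hp := hρ.dotProduct_mulVec_pos hx
      have : star ((M l)ᴴ *ᵥ x) ⬝ᵥ (ρ *ᵥ ((M l)ᴴ *ᵥ x))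
          = star x ⬝ᵥ ((M l * ρ * (M l)ᴴ) *ᵥ x) := by
        rw [Matrix.star_mulVec, conjTranspose_conjTranspose, ← Matrix.dotProduct_mulVec,
          Matrix.mulVec_mulVec, Matrix.mulVec_mulVec, Matrix.mul_assoc]
      rw [this, h3] at hp
      simp at hp
    ext i j
    have := congrFun (key (Pi.single j 1)) i
    simpa using this
  have h5 : M l = 0 := by simpa using h4
  exact sub_eq_zero.1 h5

/-- For a faithful Kraus channel, the phase `λ` of a nonzero diagonalizable
conserved quantity is a rational multiple `2πn/N` of `2π` with `N ≤ D`. -/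
theorem phase_of_diagonalizable_conserved_quantity
    {D : ℕ} {ι : Type*} [Fintype ι]
    (E : ι → Matrix (Fin D) (Fin D) ℂ)
    (hKraus : ∑ ℓ, (E ℓ)ᴴ * E ℓ = 1)
    (hFaithful : ∃ ρ : Matrix (Fin D) (Fin D) ℂ,
      ρ.PosDef ∧ ∑ ℓ, E ℓ * ρ * (E ℓ)ᴴ = ρ)
    (J : Matrix (Fin D) (Fin D) ℂ) (lam : ℝ)
    (hJne : J ≠ 0)
    (hdiag : ∃ (P : Matrix (Fin D) (Fin D) ℂ) (d : Fin D → ℂ),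
      IsUnit P.det ∧ J = P * Matrix.diagonal d * P⁻¹)
    (hJ : ∑ ℓ, (E ℓ)ᴴ * J * E ℓ = Complex.exp (-(Complex.I * (lam : ℂ))) • J) :
    ∃ (N : ℕ) (n : ℤ), 0 < N ∧ N ≤ D ∧ lam = 2 * Real.pi * (n : ℝ) / (N : ℝ) := by
  obtain ⟨ρ, hρ, hfix⟩ := hFaithful
  obtain ⟨P, d, hP, hJP⟩ := hdiag
  set c : ℂ := Complex.exp (-(Complex.I * (lam : ℂ))) with hcdef
  have hc : star c * c = 1 := by
    have hn : ‖c‖ = 1 := by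
      rw [hcdef, Complex.norm_exp]; simp
    have := Complex.conj_mul' c
    rw [hn] at this
    simpa using this
  have hc0 : c ≠ 0 := Complex.exp_ne_zero _
  have hcomm := aux_commute E hKraus ρ hρ hfix J c hc hJ
  have hPP : P⁻¹ * P = 1 := Matrix.nonsing_inv_mul P hP
  have hPP' : P * P⁻¹ = 1 := Matrix.mul_nonsing_inv P hP
  -- eigenvalues lie among the entries of `d`
  have heig : ∀ (μ : ℂ) (v : Fin D → ℂ), v ≠ 0 → J *ᵥ v = μ • v → ∃ i, d i = μ := by
    intro μ v hv h
    have hw : P⁻¹ *ᵥ v ≠ 0 := by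
      intro h0
      apply hv
      have : P *ᵥ (P⁻¹ *ᵥ v) = v := by rw [Matrix.mulVec_mulVec, hPP', Matrix.one_mulVec]
      rw [← this, h0, Matrix.mulVec_zero]
    obtain ⟨i, hi⟩ := Function.ne_iff.1 hw
    have h2 : Matrix.diagonal d *ᵥ (P⁻¹ *ᵥ v) = μ • (P⁻¹ *ᵥ v) := by
      rw [← Matrix.mulVec_smul, ← h, hJP]
      simp only [Matrix.mulVec_mulVec]
      rw [← Matrix.mul_assoc, ← Matrix.mul_assoc, hPP, Matrix.one_mul]
    have h3 := congrFun h2 i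
    rw [Matrix.mulVec_diagonal] at h3
    exact ⟨i, mul_right_cancel₀ hi h3⟩
  have hstep : ∀ (μ : ℂ) (v : Fin D → ℂ), v ≠ 0 → J *ᵥ v = μ • v →
      ∃ w : Fin D → ℂ, w ≠ 0 ∧ J *ᵥ w = (c * μ) • w := by
    intro μ v hv h
    have : ∃ l, E l *ᵥ v ≠ 0 := by
      by_contra! hall
      apply hv
      rw [← Matrix.one_mulVec v, ← hKraus, Matrix.sum_mulVec]
      apply Finset.sum_eq_zero
      intro l _
      rw [← Matrix.mulVec_mulVec, hall, Matrix.mulVec_zero]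
    obtain ⟨l, hl⟩ := this
    refine ⟨_, hl, ?_⟩
    rw [Matrix.mulVec_mulVec, hcomm, Matrix.smul_mulVec, ← Matrix.mulVec_mulVec, h,
      Matrix.mulVec_smul, smul_smul]
  obtain ⟨i0, hi0⟩ : ∃ i, d i ≠ 0 := by
    by_contra! hall
    apply hJne
    have : d = 0 := funext hall
    rw [hJP, this]
    simp
  have hpow : ∀ k : ℕ, ∃ v : Fin D → ℂ, v ≠ 0 ∧ J *ᵥ v = (c ^ k * d i0) • v := by
    intro k
    induction k with
    | zero =>
      refine ⟨P *ᵥ Pi.single i0 1, ?_, ?_⟩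
      · intro h0
        have h1 : P⁻¹ *ᵥ (P *ᵥ Pi.single i0 1) = (Pi.single i0 1 : Fin D → ℂ) := by
          rw [Matrix.mulVec_mulVec, hPP, Matrix.one_mulVec]
        rw [h0, Matrix.mulVec_zero] at h1
        have := congrFun h1 i0
        simp at this
      · have h1 : Matrix.diagonal d *ᵥ (Pi.single i0 1 : Fin D → ℂ)
            = d i0 • (Pi.single i0 1 : Fin D → ℂ) := by
          ext j
          rw [Matrix.mulVec_diagonal]
          by_cases hj : j = i0
          · subst hj; simp
          · simp [hj]
        rw [hJP, Matrix.mulVec_mulVec, Matrix.mul_assoc, hPP, Matrix.mul_one,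
          ← Matrix.mulVec_mulVec, h1, Matrix.mulVec_smul, pow_zero, one_mul]
    | succ k ih =>
      obtain ⟨v, hv, h⟩ := ih
      obtain ⟨w, hw, h'⟩ := hstep _ v hv h
      exact ⟨w, hw, by rw [h', pow_succ', mul_assoc]⟩
  have hex : ∀ k : Fin (D + 1), ∃ i, d i = c ^ (k : ℕ) * d i0 := by
    intro k
    obtain ⟨v, hv, h⟩ := hpow k
    exact heig _ v hv h
  choose f hf using hex
  obtain ⟨a, b, hab, hfab⟩ := Fintype.exists_ne_map_eq_of_card_lt f (by simp)
  have hpe : c ^ (a : ℕ) = c ^ (b : ℕ) := by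
    have := hf a
    rw [hfab, hf b] at this
    exact (mul_right_cancel₀ hi0 this).symm
  obtain ⟨N, hN0, hND, hN⟩ : ∃ N : ℕ, 0 < N ∧ N ≤ D ∧ c ^ N = 1 := by
    have hne : (a : ℕ) ≠ b := fun h => hab (Fin.ext h)
    have ha := a.2
    have hb := b.2
    rcases lt_or_gt_of_ne hne with h | h
    · refine ⟨b - a, by omega, by omega, ?_⟩
      rw [pow_sub₀ c hc0 h.le, hpe, mul_inv_cancel₀ (pow_ne_zero _ hc0)]
    · refine ⟨a - b, by omega, by omega, ?_⟩
      rw [pow_sub₀ c hc0 h.le, hpe, mul_inv_cancel₀ (pow_ne_zero _ hc0)]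
  rw [hcdef, ← Complex.exp_nat_mul, Complex.exp_eq_one_iff] at hN
  obtain ⟨n, hn⟩ := hN
  refine ⟨N, -n, hN0, hND, ?_⟩
  have him := congrArg Complex.im hn
  simp at him
  have : (N : ℝ) ≠ 0 := by positivity
  rw [eq_div_iff this]
  push_cast
  linarith
end

section
/- Let {E_ℓ} be a Kraus family on the D×D complex matrices whose channel E is faithful, and let J be a unitary D×D matrix that is a conserved quantity with phase λ. Then the channel is covariant under J: for every D×D matrix ρ, J E(ρ) J† = E(J ρ J†). -/
open Matrix ComplexOrder

/-- A unitary conserved quantity `J` of a faithful Kraus channel is a symmetry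
of the channel: `J E(ρ) Jᴴ = E(J ρ Jᴴ)` for all `ρ`. -/
theorem channel_covariant_under_unitary_conserved_quantity
    {D : ℕ} {ι : Type*} [Fintype ι]
    (E : ι → Matrix (Fin D) (Fin D) ℂ)
    (hKraus : ∑ ℓ, (E ℓ)ᴴ * E ℓ = 1)
    (hFaithful : ∃ ρ : Matrix (Fin D) (Fin D) ℂ,
      ρ.PosDef ∧ ∑ ℓ, E ℓ * ρ * (E ℓ)ᴴ = ρ)
    (J : Matrix (Fin D) (Fin D) ℂ) (lam : ℝ)
    (hJunitary : Jᴴ * J = 1 ∧ J * Jᴴ = 1)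
    (hJ : ∑ ℓ, (E ℓ)ᴴ * J * E ℓ = Complex.exp (-(Complex.I * (lam : ℂ))) • J) :
    ∀ ρ : Matrix (Fin D) (Fin D) ℂ,
      J * (∑ ℓ, E ℓ * ρ * (E ℓ)ᴴ) * Jᴴ = ∑ ℓ, E ℓ * (J * ρ * Jᴴ) * (E ℓ)ᴴ := by
  obtain ⟨h1, h2⟩ := hJunitary
  set c : ℂ := Complex.exp (-(Complex.I * (lam : ℂ))) with hc
  have hcc : c * star c = 1 := by
    have hn : ‖c‖ = 1 := by
      rw [hc, Complex.norm_exp]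
      simp
    have := Complex.mul_conj c
    rw [Complex.normSq_eq_norm_sq, hn] at this
    simpa using this
  have hJ' : ∑ ℓ, (E ℓ)ᴴ * Jᴴ * E ℓ = star c • Jᴴ := by
    have := congrArg conjTranspose hJ
    rw [conjTranspose_sum, conjTranspose_smul] at this
    rw [← this]
    refine Finset.sum_congr rfl fun ℓ _ => ?_
    simp [Matrix.mul_assoc]
  have hterm : ∀ ℓ, (J * E ℓ - c • (E ℓ * J))ᴴ * (J * E ℓ - c • (E ℓ * J)) =
      (E ℓ)ᴴ * E ℓ - c • (((E ℓ)ᴴ * Jᴴ * E ℓ) * J) - star c • (Jᴴ * ((E ℓ)ᴴ * J * E ℓ))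
        + Jᴴ * ((E ℓ)ᴴ * E ℓ) * J := by
    intro ℓ
    have e2 : Jᴴ * ((E ℓ)ᴴ * E ℓ) * J = (c * star c) • (Jᴴ * ((E ℓ)ᴴ * E ℓ) * J) := by
      rw [hcc, one_smul]
    rw [e2]
    simp only [conjTranspose_sub, conjTranspose_smul, conjTranspose_mul, Matrix.sub_mul,
      Matrix.mul_sub, Matrix.smul_mul, Matrix.mul_smul, Matrix.mul_assoc, smul_sub, smul_smul]
    rw [← Matrix.mul_assoc Jᴴ J (E ℓ), h1, Matrix.one_mul]
    abel
  have hsum : ∑ ℓ, (J * E ℓ - c • (E ℓ * J))ᴴ * (J * E ℓ - c • (E ℓ * J)) = 0 := by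
    simp only [hterm]
    rw [Finset.sum_add_distrib, Finset.sum_sub_distrib, Finset.sum_sub_distrib,
      ← Finset.smul_sum, ← Finset.smul_sum, ← Finset.sum_mul, ← Finset.mul_sum,
      ← Finset.sum_mul, ← Finset.mul_sum, hKraus, hJ, hJ']
    simp only [Matrix.smul_mul, Matrix.mul_smul, smul_smul, Matrix.mul_one, h1,
      mul_comm (star c) c, hcc, one_smul]
    abel
  have hzero : ∀ ℓ, J * E ℓ = c • (E ℓ * J) := by
    intro ℓ
    have ht := congrArg trace hsum
    rw [trace_sum, trace_zero, Finset.sum_eq_zero_iff_of_nonneg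
      (fun k _ => (posSemidef_conjTranspose_mul_self _).trace_nonneg)] at ht
    exact sub_eq_zero.mp (trace_conjTranspose_mul_self_eq_zero_iff.mp (ht ℓ (Finset.mem_univ _)))
  intro ρ
  rw [Finset.mul_sum, Finset.sum_mul]
  refine Finset.sum_congr rfl fun ℓ _ => ?_
  calc J * (E ℓ * ρ * (E ℓ)ᴴ) * Jᴴ = (J * E ℓ) * ρ * (J * E ℓ)ᴴ := by
        simp [Matrix.mul_assoc]
    _ = (c * star c) • (E ℓ * (J * ρ * Jᴴ) * (E ℓ)ᴴ) := by
        rw [hzero]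
        simp only [conjTranspose_smul, conjTranspose_mul, Matrix.smul_mul, Matrix.mul_smul,
          smul_smul, Matrix.mul_assoc, mul_comm (star c) c]
    _ = _ := by rw [hcc, one_smul]
end

section
/- Let {E_ℓ} be a Kraus family on the d₁×d₁ complex matrices whose channel is faithful, let J be a conserved quantity with phase λ, and let {C_ℓ} be a family of d₁×d₂ complex matrices (indexed by the same finite index set) with ∑_ℓ E_ℓ† C_ℓ = 0. Then ∑_ℓ E_ℓ† J C_ℓ = 0 and ∑_ℓ C_ℓ† J E_ℓ = 0. -/
open Matrix ComplexOrder

theorem key_comm {d : ℕ} {ι : Type*} [Fintype ι]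
    (E : ι → Matrix (Fin d) (Fin d) ℂ)
    (hKraus : ∑ ℓ, (E ℓ)ᴴ * E ℓ = 1)
    (ρ : Matrix (Fin d) (Fin d) ℂ) (hρ : ρ.PosDef)
    (hfix : ∑ ℓ, E ℓ * ρ * (E ℓ)ᴴ = ρ)
    (J : Matrix (Fin d) (Fin d) ℂ) (c : ℂ) (hc : star c * c = 1)
    (hJ : ∑ ℓ, (E ℓ)ᴴ * J * E ℓ = c • J) (ℓ : ι) :
    J * E ℓ = c • (E ℓ * J) := by
  have hJ' : ∑ ℓ, (E ℓ)ᴴ * Jᴴ * E ℓ = star c • Jᴴ := by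
    have := congrArg conjTranspose hJ
    simpa [conjTranspose_sum, conjTranspose_mul, conjTranspose_smul, Matrix.mul_assoc] using this
  have hsum : ∑ ℓ, (J * E ℓ - c • (E ℓ * J))ᴴ * (J * E ℓ - c • (E ℓ * J))
      = ∑ ℓ, (E ℓ)ᴴ * (Jᴴ * J) * E ℓ - Jᴴ * J := by
    have hexp : ∀ ℓ, (J * E ℓ - c • (E ℓ * J))ᴴ * (J * E ℓ - c • (E ℓ * J))
        = (E ℓ)ᴴ * (Jᴴ * J) * E ℓ - c • (((E ℓ)ᴴ * Jᴴ * E ℓ) * J)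
          - star c • (Jᴴ * ((E ℓ)ᴴ * J * E ℓ)) + (star c * c) • (Jᴴ * ((E ℓ)ᴴ * E ℓ) * J) := by
      intro ℓ
      simp only [conjTranspose_sub, conjTranspose_mul, conjTranspose_smul, Matrix.sub_mul,
        Matrix.mul_sub, Matrix.smul_mul, Matrix.mul_smul, Matrix.mul_assoc, smul_sub, smul_smul]
      rw [mul_comm c (star c)]
      abel
    simp only [hexp, Finset.sum_add_distrib, Finset.sum_sub_distrib, ← Finset.smul_sum,
      ← Finset.sum_mul, ← Finset.mul_sum, hJ, hJ', hKraus]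
    simp only [Matrix.smul_mul, Matrix.mul_smul, smul_smul, hc, mul_comm c (star c), Matrix.mul_one]
    simp
  have htr : ∑ ℓ, ((J * E ℓ - c • (E ℓ * J)) * ρ * (J * E ℓ - c • (E ℓ * J))ᴴ).trace = 0 := by
    have h1 : ∀ D : Matrix (Fin d) (Fin d) ℂ, (D * ρ * Dᴴ).trace = (Dᴴ * D * ρ).trace := by
      intro D
      rw [Matrix.trace_mul_comm, Matrix.mul_assoc]
    simp only [h1]
    rw [← trace_sum, ← Finset.sum_mul, hsum, Matrix.sub_mul, trace_sub, Finset.sum_mul, trace_sum]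
    have h2 : ∀ ℓ, ((E ℓ)ᴴ * (Jᴴ * J) * E ℓ * ρ).trace
        = (Jᴴ * J * (E ℓ * ρ * (E ℓ)ᴴ)).trace := by
      intro ℓ
      rw [Matrix.mul_assoc, Matrix.mul_assoc, Matrix.trace_mul_comm]
      simp only [Matrix.mul_assoc]
    simp only [h2]
    rw [← trace_sum, ← Finset.mul_sum, hfix, sub_self]
  have hpsd : ∀ ℓ, ((J * E ℓ - c • (E ℓ * J)) * ρ * (J * E ℓ - c • (E ℓ * J))ᴴ).PosSemidef :=
    fun ℓ => hρ.posSemidef.mul_mul_conjTranspose_same _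
  have h0 := (Finset.sum_eq_zero_iff_of_nonneg (fun ℓ _ => (hpsd ℓ).trace_nonneg)).1 htr ℓ
    (Finset.mem_univ _)
  have h3 := (hpsd ℓ).trace_eq_zero_iff.1 h0
  rw [← sub_eq_zero]
  generalize J * E ℓ - c • (E ℓ * J) = D at h3
  have h4 : Dᴴ = 0 := by
    apply Matrix.ext_of_mulVec_single
    intro i
    rw [Matrix.zero_mulVec]
    by_contra hne
    have hpos := hρ.dotProduct_mulVec_pos hne
    have hz : star (Dᴴ *ᵥ Pi.single i 1) ⬝ᵥ (ρ *ᵥ (Dᴴ *ᵥ Pi.single i 1)) = 0 := by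
      rw [Matrix.star_mulVec, conjTranspose_conjTranspose, ← Matrix.dotProduct_mulVec,
        Matrix.mulVec_mulVec, Matrix.mulVec_mulVec, h3]
      simp
    rw [hz] at hpos
    exact lt_irrefl _ hpos
  exact conjTranspose_eq_zero.1 h4

/-- If `{Eℓ}` is a faithful Kraus family on `d₁ × d₁` matrices, `J` a conserved
quantity with phase `λ`, and `{Cℓ}` are `d₁ × d₂` matrices with `∑ ℓ, Eℓᴴ Cℓ = 0`, then
`∑ ℓ, Eℓᴴ J Cℓ = 0` and `∑ ℓ, Cℓᴴ J Eℓ = 0`. -/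
theorem conserved_quantity_offdiagonal_vanishing
    {d₁ d₂ : ℕ} {ι : Type*} [Fintype ι]
    (E : ι → Matrix (Fin d₁) (Fin d₁) ℂ)
    (hKraus : ∑ ℓ, (E ℓ)ᴴ * E ℓ = 1)
    (hFaithful : ∃ ρ : Matrix (Fin d₁) (Fin d₁) ℂ,
      ρ.PosDef ∧ ∑ ℓ, E ℓ * ρ * (E ℓ)ᴴ = ρ)
    (J : Matrix (Fin d₁) (Fin d₁) ℂ) (lam : ℝ)
    (hJ : ∑ ℓ, (E ℓ)ᴴ * J * E ℓ = Complex.exp (-(Complex.I * (lam : ℂ))) • J)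
    (C : ι → Matrix (Fin d₁) (Fin d₂) ℂ)
    (hC : ∑ ℓ, (E ℓ)ᴴ * C ℓ = 0) :
    (∑ ℓ, (E ℓ)ᴴ * J * C ℓ = 0) ∧ (∑ ℓ, (C ℓ)ᴴ * J * E ℓ = 0) := by
  obtain ⟨ρ, hρ, hfix⟩ := hFaithful
  have hc : star (Complex.exp (-(Complex.I * (lam : ℂ)))) *
      Complex.exp (-(Complex.I * (lam : ℂ))) = 1 := by
    rw [Complex.star_def, ← Complex.exp_conj, ← Complex.exp_add]
    simp
  generalize Complex.exp (-(Complex.I * (lam : ℂ))) = c at hJ hc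
  have hJ' : ∑ ℓ, (E ℓ)ᴴ * Jᴴ * E ℓ = star c • Jᴴ := by
    have := congrArg conjTranspose hJ
    simpa [conjTranspose_sum, conjTranspose_mul, conjTranspose_smul, Matrix.mul_assoc] using this
  have k1 := key_comm E hKraus ρ hρ hfix J c hc hJ
  have k2 := key_comm E hKraus ρ hρ hfix Jᴴ (star c) (by rw [star_star, mul_comm]; exact hc) hJ'
  constructor
  · have k3 : ∀ ℓ, (E ℓ)ᴴ * J = c • (J * (E ℓ)ᴴ) := by
      intro ℓ
      have := congrArg conjTranspose (k2 ℓ)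
      simpa [conjTranspose_mul, conjTranspose_smul] using this
    simp only [k3, Matrix.smul_mul, Matrix.mul_assoc]
    rw [← Finset.smul_sum, ← Matrix.mul_sum, hC]
    simp
  · have hC' : ∑ ℓ, (C ℓ)ᴴ * E ℓ = 0 := by
      have := congrArg conjTranspose hC
      simpa [conjTranspose_sum, conjTranspose_mul] using this
    simp only [Matrix.mul_assoc, k1, Matrix.mul_smul]
    simp only [← Matrix.mul_assoc]
    rw [← Finset.smul_sum, ← Matrix.sum_mul, hC']
    simp
end
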